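/- arXiv:cs/0602012 — 2 statements merged into one kernel-verified Lean document; each statement's English description precedes it below -/
import Mathlib

section
/- Let f, v : ℕ → ℕ be compatible maps with f ergodic. Then each of the four maps x ↦ f(x + 4·v(x)), x ↦ f(x ⊕ 4·v(x)), x ↦ f(x) + 4·v(x), and x ↦ f(x) ⊕ 4·v(x) is compatible and ergodic. -/
namespace Paper

/-- A sequence is purely periodic with period length `t`. -/
def PurePeriodic {α : Type*} (s : ℕ → α) (t : ℕ) : Prop :=
  ∀ i, s (i + t) = s i

/-- `t` is the length of the shortest period of the sequence `s`. -/
def ShortestPeriod {α : Type*} (s : ℕ → α) (t : ℕ) : Prop :=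
  1 ≤ t ∧ PurePeriodic s t ∧ ∀ t', 1 ≤ t' → PurePeriodic s t' → t ≤ t'

/-- A map `f : ℤ_[p] → ℤ_[p]` is compatible if `x ≡ y (mod p^n)` implies
`f x ≡ f y (mod p^n)` for all `n ≥ 1`. -/
def Compatible (p : ℕ) [Fact p.Prime] (f : ℤ_[p] → ℤ_[p]) : Prop :=
  ∀ n : ℕ, 1 ≤ n → ∀ x y : ℤ_[p],
    PadicInt.toZModPow n x = PadicInt.toZModPow n y →
    PadicInt.toZModPow n (f x) = PadicInt.toZModPow n (f y)

/-- A map `f : ℤ_[p] → ℤ_[p]` is measure-preserving if the induced map modulo `p^n`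
is bijective for every `n ≥ 1`. -/
def MeasurePreserving (p : ℕ) [Fact p.Prime] (f : ℤ_[p] → ℤ_[p]) : Prop :=
  ∀ n : ℕ, 1 ≤ n → ∃ fn : ZMod (p ^ n) → ZMod (p ^ n),
    (∀ x, fn (PadicInt.toZModPow n x) = PadicInt.toZModPow n (f x)) ∧
    Function.Bijective fn

/-- A map `f : ℤ_[p] → ℤ_[p]` is ergodic if the induced map modulo `p^n` is a permutation
consisting of a single cycle of length `p^n` (i.e. it is bijective and iteration of it
reaches every point from every point), for every `n ≥ 1`. -/
def Ergodic (p : ℕ) [Fact p.Prime] (f : ℤ_[p] → ℤ_[p]) : Prop :=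
  ∀ n : ℕ, 1 ≤ n → ∃ fn : ZMod (p ^ n) → ZMod (p ^ n),
    (∀ x, fn (PadicInt.toZModPow n x) = PadicInt.toZModPow n (f x)) ∧
    Function.Bijective fn ∧ ∀ a b : ZMod (p ^ n), ∃ k : ℕ, fn^[k] a = b

/-- `digit j x` is the `j`-th binary digit of the 2-adic integer `x`, as an element of `ZMod 2`. -/
noncomputable def digit (j : ℕ) (x : ℤ_[2]) : ZMod 2 :=
  (((PadicInt.toZModPow (j + 1) x).val / 2 ^ j) % 2 : ℕ)

/-- `digitZ j x` is the `j`-th binary digit of the canonical representative of `x : ZMod N`. -/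
def digitZ {N : ℕ} (j : ℕ) (x : ZMod N) : ZMod 2 :=
  ((x.val / 2 ^ j) % 2 : ℕ)

/-- The conditions of Theorem `thm:WP` on the family `g 0, …, g (m-1)`:
(1) the sequence `(g (i % m) 0 mod 2)` is purely periodic with shortest period length `m`;
(2) `∑ i < m, g i 0 ≡ 1 (mod 2)`;
(3) for every `k ≥ 1`, `∑ j < m, ∑ z < 2^k, g j z ≡ 2^k (mod 2^(k+1))`. -/
def WP (m : ℕ) (g : ℕ → ℤ_[2] → ℤ_[2]) : Prop :=
  ShortestPeriod (fun i => PadicInt.toZModPow 1 (g (i % m) 0)) m ∧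
  PadicInt.toZModPow 1 (∑ i ∈ Finset.range m, g i 0) = 1 ∧
  ∀ k : ℕ, 1 ≤ k →
    PadicInt.toZModPow (k + 1)
        (∑ j ∈ Finset.range m, ∑ z ∈ Finset.range (2 ^ k), g j (z : ℤ_[2])) =
      (2 ^ k : ZMod (2 ^ (k + 1)))

/-- `L` is the length of some LFSR over `𝔽₂` producing the binary sequence `u`:
there are `c₁, …, c_L` with `u (i+L) = c₁ * u (i+L-1) + ⋯ + c_L * u i` for all `i`. -/
def IsLFSR (u : ℕ → ZMod 2) (L : ℕ) : Prop :=
  ∃ c : Fin L → ZMod 2, ∀ i : ℕ, u (i + L) = ∑ t : Fin L, c t * u (i + L - 1 - t.val)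

/-- The linear complexity over `𝔽₂` of a binary sequence: the least length of an LFSR
producing it. -/
noncomputable def linComplexity (u : ℕ → ZMod 2) : ℕ := sInf {L | IsLFSR u L}

/-- A map `f : ℕ → ℕ` is compatible if `u ≡ w (mod 2^r)` implies `f u ≡ f w (mod 2^r)`. -/
def NatCompatible (f : ℕ → ℕ) : Prop :=
  ∀ r : ℕ, 1 ≤ r → ∀ u w : ℕ, u % 2 ^ r = w % 2 ^ r → f u % 2 ^ r = f w % 2 ^ r

/-- A map `f : ℕ → ℕ` is ergodic if the induced map on `ZMod (2^n)` is a permutation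
consisting of a single cycle of length `2^n`, for every `n ≥ 1`. -/
def NatErgodic (f : ℕ → ℕ) : Prop :=
  ∀ n : ℕ, 1 ≤ n → ∃ fn : ZMod (2 ^ n) → ZMod (2 ^ n),
    (∀ u : ℕ, fn (u : ZMod (2 ^ n)) = (f u : ZMod (2 ^ n))) ∧
    Function.Bijective fn ∧ ∀ a b : ZMod (2 ^ n), ∃ k : ℕ, fn^[k] a = b

end Paper

/-!
Let `f` be compatible and injective modulo every power of two. If `f` is a single cycle modulo
`N = 2 ^ n`, then after `N` steps the orbit of `0` modulo `2 * N` is at `0` or at `N`, and `f` is a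
single cycle modulo `2 * N` exactly in the second case. The position reached is the sum of `f r - r`
over `r < N`, which modulo `2 * N` is `N` times the number of `r < N` for which bit `n` of `f r` is
set. Hence ergodicity says that for every `n` this number is odd.

Replacing `f` by `f + 4 * v` preserves these parities because the sum of `4 * v r` over `r < 2 ^ n`
is divisible by `2 ^ (n + 1)`. Replacing it by `f ^^^ 4 * v` preserves them because bit `n` of
`4 * v` is determined by the argument modulo `2 ^ (n - 1)`, hence set an even number of times on
`r < 2 ^ n`. Finally, with `s x = x + 4 * v x` or `s x = x ^^^ 4 * v x`, the map `f ∘ s` is a factor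
through `f` of `s ∘ f`, which is one of the two maps already treated, with `v ∘ f` in place of `v`.
-/

namespace Paper

open Function Finset

section Dynamics

variable {X Y : Type*} {φ : X → X} {ψ : Y → Y} {π : Y → X} {τ : Y → Y}

/-- Iterating `φ` leads from every point to every point. On a finite type these maps are the
permutations consisting of a single cycle. -/
def IsTransitive (φ : X → X) : Prop :=
  ∀ a b, ∃ k : ℕ, φ^[k] a = b

lemma isTransitive_of_subsingleton [Subsingleton X] (φ : X → X) : IsTransitive φ :=
  fun _ _ => ⟨0, Subsingleton.elim _ _⟩

namespace IsTransitive

lemma surjective (hφ : IsTransitive φ) : Surjective φ := by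
  intro b
  obtain ⟨k, hk⟩ := hφ (φ b) b
  exact ⟨φ^[k] b, by rw [← iterate_succ_apply' φ, iterate_succ_apply, hk]⟩

lemma of_semiconj (hψ : IsTransitive ψ) (h : Semiconj π ψ φ) (hπ : Surjective π) :
    IsTransitive φ := by
  intro a b
  obtain ⟨a, rfl⟩ := hπ a
  obtain ⟨b, rfl⟩ := hπ b
  obtain ⟨k, rfl⟩ := hψ a b
  exact ⟨k, ((h.iterate_right k).eq a).symm⟩

lemma minimalPeriod_pos (hφ : IsTransitive φ) (x : X) : 0 < minimalPeriod φ x := by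
  obtain ⟨k, hk⟩ := hφ (φ x) x
  exact IsPeriodicPt.minimalPeriod_pos k.succ_pos ((iterate_succ_apply φ k x).trans hk)

lemma birkhoffSum_minimalPeriod [Fintype X] {M : Type*} [AddCommMonoid M] (hφ : IsTransitive φ)
    (F : X → M) (x : X) : birkhoffSum φ F (minimalPeriod φ x) x = ∑ y, F y := by
  refine sum_nbij (fun i => φ^[i] x) (fun _ _ => mem_univ _) ?_ ?_ fun _ _ => rfl
  · simpa only [coe_range] using iterate_injOn_Iio_minimalPeriod
  · intro y _
    obtain ⟨k, hk⟩ := hφ x y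
    exact ⟨k % minimalPeriod φ x, mem_range.2 (Nat.mod_lt _ (hφ.minimalPeriod_pos x)),
      iterate_mod_minimalPeriod_eq.trans hk⟩

lemma minimalPeriod_eq_card [Fintype X] (hφ : IsTransitive φ) (x : X) :
    minimalPeriod φ x = Fintype.card X := by
  simpa [birkhoffSum] using hφ.birkhoffSum_minimalPeriod (fun _ => (1 : ℕ)) x

lemma birkhoffSum_card [Fintype X] {M : Type*} [AddCommMonoid M] (hφ : IsTransitive φ)
    (F : X → M) (x : X) : birkhoffSum φ F (Fintype.card X) x = ∑ y, F y := by
  rw [← hφ.minimalPeriod_eq_card x, hφ.birkhoffSum_minimalPeriod]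

end IsTransitive

/-- `π` is two-to-one, and `τ` exchanges the two points of each of its nonempty fibres. This is how
the residues modulo `2 * N` lie over those modulo `N`, with `τ` adding `N`. -/
structure IsDoubleCover (π : Y → X) (τ : Y → Y) : Prop where
  apply_eq_iff : ∀ y y', π y = π y' ↔ y' = y ∨ y' = τ y
  deck_ne : ∀ y, τ y ≠ y

namespace IsDoubleCover

lemma apply_deck (h : IsDoubleCover π τ) (y : Y) : π (τ y) = π y :=
  ((h.apply_eq_iff y (τ y)).2 (Or.inr rfl)).symm

lemma commute_deck (h : IsDoubleCover π τ) (hπ : Semiconj π ψ φ) (hψ : Injective ψ) :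
    Function.Commute ψ τ := by
  intro y
  have same_fibre : π (ψ y) = π (ψ (τ y)) := by rw [hπ.eq, hπ.eq, h.apply_deck]
  exact ((h.apply_eq_iff _ _).1 same_fibre).resolve_left fun e => h.deck_ne y (hψ e)

lemma isTransitive_iff_iterate_card [Fintype X] (h : IsDoubleCover π τ) (hπ : Semiconj π ψ φ)
    (hψ : Injective ψ) (hφ : IsTransitive φ) (y : Y) :
    IsTransitive ψ ↔ ψ^[Fintype.card X] y = τ y := by
  have hτ (k : ℕ) (z : Y) : ψ^[k] (τ z) = τ (ψ^[k] z) :=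
    ((h.commute_deck hπ hψ).iterate_left k).eq z
  have reach_fibre (a b : Y) : ∃ k, b = ψ^[k] a ∨ b = τ (ψ^[k] a) := by
    obtain ⟨k, hk⟩ := hφ (π a) (π b)
    exact ⟨k, (h.apply_eq_iff _ _).1 (((hπ.iterate_right k).eq a).trans hk)⟩
  constructor
  · intro ht
    obtain ⟨k, hk⟩ := ht y (τ y)
    have period : IsPeriodicPt φ k (π y) := by
      rw [IsPeriodicPt, IsFixedPt, ← (hπ.iterate_right k).eq, hk, h.apply_deck]
    have return_to_fibre : π y = π (ψ^[Fintype.card X] y) := by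
      rw [(hπ.iterate_right _).eq, ← hφ.minimalPeriod_eq_card (π y), iterate_minimalPeriod]
    refine ((h.apply_eq_iff _ _).1 return_to_fibre).resolve_left fun hfix => h.deck_ne y ?_
    rw [← hk]
    exact IsPeriodicPt.trans_dvd hfix (hφ.minimalPeriod_eq_card (π y) ▸ period.minimalPeriod_dvd)
  · intro hy
    have iterate_card (z : Y) : ψ^[Fintype.card X] z = τ z := by
      obtain ⟨k, rfl | rfl⟩ := reach_fibre y z
      · rw [← iterate_add_apply, add_comm, iterate_add_apply, hy, hτ]
      · rw [hτ, ← iterate_add_apply, add_comm, iterate_add_apply, hy, hτ]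
    intro a b
    obtain ⟨k, rfl | rfl⟩ := reach_fibre a b
    · exact ⟨k, rfl⟩
    · exact ⟨Fintype.card X + k, by rw [iterate_add_apply, iterate_card]⟩

lemma birkhoffSum_card [Fintype X] {M : Type*} [AddCommMonoid M] (h : IsDoubleCover π τ)
    (hπ : Semiconj π ψ φ) (hφ : IsTransitive φ) {s : X → Y} (hs : RightInverse s π)
    {F : Y → M} (hF : ∀ y, F (τ y) = F y) (y : Y) :
    birkhoffSum ψ F (Fintype.card X) y = ∑ x, F (s x) := by
  have factor (z : Y) : F z = F (s (π z)) := by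
    rcases (h.apply_eq_iff z (s (π z))).1 (hs (π z)).symm with e | e
    · rw [e]
    · rw [e, hF]
  rw [← hφ.birkhoffSum_card (fun x => F (s x)) (π y)]
  refine sum_congr rfl fun k _ => ?_
  rw [factor, (hπ.iterate_right k).eq]

end IsDoubleCover

end Dynamics

section Residues

variable {N : ℕ} {f g : ℕ → ℕ}

/-- `f` is well defined on residues modulo `N`: compatibility at a single modulus. -/
def CompatibleMod (N : ℕ) (f : ℕ → ℕ) : Prop :=
  ∀ ⦃a b⦄, a ≡ b [MOD N] → f a ≡ f b [MOD N]

/-- `f` separates residues modulo `N`. For a compatible `f` and all moduli `2 ^ n` this says that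
`f` preserves the 2-adic measure. -/
def InjectiveMod (N : ℕ) (f : ℕ → ℕ) : Prop :=
  ∀ ⦃a b⦄, f a ≡ f b [MOD N] → a ≡ b [MOD N]

/-- The self-map of `ZMod N` induced by `f`, defined for any `f` by means of the representatives
below `N`. -/
def residueMap (N : ℕ) (f : ℕ → ℕ) (z : ZMod N) : ZMod N :=
  f z.val

lemma CompatibleMod.semiconj_natCast (hf : CompatibleMod N f) :
    Semiconj ((↑) : ℕ → ZMod N) f (residueMap N f) := fun a => by
  refine ((ZMod.natCast_eq_natCast_iff _ _ _).2 (hf ?_)).symm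
  rw [ZMod.val_natCast]
  exact Nat.mod_modEq a N

lemma CompatibleMod.residueMap_comp (hf : CompatibleMod N f) :
    residueMap N (f ∘ g) = residueMap N f ∘ residueMap N g :=
  funext fun z => hf.semiconj_natCast (g z.val)

lemma InjectiveMod.residueMap_injective [NeZero N] (hf : InjectiveMod N f) :
    Injective (residueMap N f) := by
  intro y z e
  rw [← ZMod.natCast_zmod_val y, ← ZMod.natCast_zmod_val z, ZMod.natCast_eq_natCast_iff]
  exact hf ((ZMod.natCast_eq_natCast_iff _ _ _).1 e)

lemma CompatibleMod.injectiveMod_of_isTransitive [NeZero N] (hf : CompatibleMod N f)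
    (ht : IsTransitive (residueMap N f)) : InjectiveMod N f := by
  intro a b e
  rw [← ZMod.natCast_eq_natCast_iff] at e ⊢
  apply Finite.injective_iff_surjective.2 ht.surjective
  rwa [← hf.semiconj_natCast, ← hf.semiconj_natCast]

lemma InjectiveMod.sum_range_mod [NeZero N] (hf : InjectiveMod N f) :
    ∑ r ∈ range N, f r % N = ∑ r ∈ range N, r := by
  have hmaps : Set.MapsTo (fun r => f r % N) (range N) (range N) := fun r _ =>
    mem_coe.2 (mem_range.2 (Nat.mod_lt _ (NeZero.pos N)))
  have hinj : Set.InjOn (fun r => f r % N) (range N) := fun a ha b hb e =>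
    (hf e).eq_of_lt_of_lt (mem_range.1 ha) (mem_range.1 hb)
  exact sum_nbij _ hmaps hinj (surjOn_of_injOn_of_card_le _ hmaps hinj le_rfl) fun _ _ => rfl

lemma InjectiveMod.sum_range [NeZero N] (hf : InjectiveMod N f) :
    ∑ r ∈ range N, f r = ∑ r ∈ range N, r + N * ∑ r ∈ range N, f r / N := by
  rw [← hf.sum_range_mod, mul_sum, ← sum_add_distrib]
  exact sum_congr rfl fun r _ => (Nat.mod_add_div (f r) N).symm

lemma mul_modEq_self_two_mul_iff_odd [NeZero N] (m : ℕ) : N * m ≡ N [MOD 2 * N] ↔ Odd m := by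
  have h : N * m ≡ N * 1 [MOD N * 2] ↔ m ≡ 1 [MOD 2] :=
    Nat.ModEq.mul_left_cancel_iff' (NeZero.ne N)
  rwa [mul_one, mul_comm N 2, Nat.ModEq, Nat.ModEq, ← Nat.odd_iff] at h

lemma modEq_iff_modEq_two_mul (a b : ℕ) :
    a ≡ b [MOD N] ↔ b ≡ a [MOD 2 * N] ∨ b ≡ a + N [MOD 2 * N] := by
  constructor
  · intro h
    obtain ⟨t, ht⟩ := Nat.modEq_iff_dvd.1 h.symm
    obtain ⟨k, rfl | rfl⟩ := Int.even_or_odd' t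
    · exact Or.inl (Nat.modEq_iff_dvd.2 ⟨k, by push_cast; linear_combination ht⟩)
    · exact Or.inr (Nat.modEq_iff_dvd.2 ⟨k + 1, by push_cast; linear_combination ht⟩)
  · rintro (h | h)
    · exact (h.of_mul_left 2).symm
    · exact ((h.of_mul_left 2).trans Nat.add_modEq_right).symm

lemma isDoubleCover_castHom [NeZero N] :
    IsDoubleCover (ZMod.castHom (dvd_mul_left N 2) (ZMod N)) (· + (N : ZMod (2 * N))) where
  apply_eq_iff y z := by
    obtain ⟨a, rfl⟩ := ZMod.natCast_zmod_surjective y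
    obtain ⟨b, rfl⟩ := ZMod.natCast_zmod_surjective z
    rw [map_natCast, map_natCast, ← Nat.cast_add]
    simp only [ZMod.natCast_eq_natCast_iff]
    exact modEq_iff_modEq_two_mul a b
  deck_ne y e := by
    have hN := NeZero.pos N
    have shift_eq_zero : N ≡ 0 [MOD 2 * N] := by
      rw [← ZMod.natCast_eq_natCast_iff, Nat.cast_zero]
      exact add_eq_left.1 e
    exact hN.ne' (shift_eq_zero.eq_of_lt_of_lt (by omega) (by omega))

lemma residueMap_semiconj_castHom {M : ℕ} [NeZero M] (h : N ∣ M) (hN : CompatibleMod N f)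
    (hM : CompatibleMod M f) :
    Semiconj (ZMod.castHom h (ZMod N)) (residueMap M f) (residueMap N f) := fun z => by
  obtain ⟨a, rfl⟩ := ZMod.natCast_zmod_surjective z
  rw [← hM.semiconj_natCast, map_natCast, map_natCast, hN.semiconj_natCast]

/-- Modulo `2 * N` the displacement `f x - x` depends only on `x` modulo `N`, so its sum along a
cycle modulo `N` is its sum over the representatives below `N`. -/
lemma iterate_residueMap_two_mul_zero [NeZero N] (hN : CompatibleMod N f)
    (h2N : CompatibleMod (2 * N) f) (hinj : InjectiveMod (2 * N) f)
    (ht : IsTransitive (residueMap N f)) :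
    (residueMap (2 * N) f)^[N] 0 = (N * ∑ r ∈ range N, f r / N : ℕ) := by
  have cover := isDoubleCover_castHom (N := N)
  have proj := residueMap_semiconj_castHom (dvd_mul_left N 2) hN h2N
  set ψ := residueMap (2 * N) f
  have displacement_deck (z : ZMod (2 * N)) : ψ (z + N) - (z + N) = ψ z - z := by
    rw [(cover.commute_deck proj hinj.residueMap_injective).eq z]
    ring
  have section_castHom : RightInverse (fun x : ZMod N => (x.val : ZMod (2 * N)))
      (ZMod.castHom (dvd_mul_left N 2) (ZMod N)) := fun x => by
    rw [map_natCast, ZMod.natCast_zmod_val]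
  calc ψ^[N] 0 = birkhoffSum ψ (fun z => ψ z - z) (Fintype.card (ZMod N)) 0 := by
        simp only [birkhoffSum, ← iterate_succ_apply', sum_range_sub (ψ^[·] 0), ZMod.card,
          iterate_zero_apply, sub_zero]
    _ = ∑ x : ZMod N, (ψ x.val - x.val) :=
        cover.birkhoffSum_card proj ht section_castHom displacement_deck 0
    _ = ∑ r ∈ range N, ((f r : ZMod (2 * N)) - r) := by
        refine sum_nbij ZMod.val (fun x _ => mem_range.2 x.val_lt) (ZMod.val_injective N).injOn
          (fun r hr => ⟨r, mem_univ _, ZMod.val_cast_of_lt (mem_range.1 hr)⟩) fun x _ => ?_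
        rw [h2N.semiconj_natCast]
    _ = (N * ∑ r ∈ range N, f r / N : ℕ) := by
        rw [sum_sub_distrib, ← Nat.cast_sum, ← Nat.cast_sum,
          (hN.injectiveMod_of_isTransitive ht).sum_range, Nat.cast_add, add_sub_cancel_left]

lemma isTransitive_residueMap_two_mul_iff [NeZero N] (hN : CompatibleMod N f)
    (h2N : CompatibleMod (2 * N) f) (hinj : InjectiveMod (2 * N) f)
    (ht : IsTransitive (residueMap N f)) :
    IsTransitive (residueMap (2 * N) f) ↔ Odd (∑ r ∈ range N, f r / N) := by
  rw [isDoubleCover_castHom.isTransitive_iff_iterate_card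
      (residueMap_semiconj_castHom _ hN h2N) hinj.residueMap_injective ht 0,
    ZMod.card, iterate_residueMap_two_mul_zero hN h2N hinj ht, zero_add,
    ZMod.natCast_eq_natCast_iff, mul_modEq_self_two_mul_iff_odd]

end Residues

section Ergodic

variable {f g s d v : ℕ → ℕ}

lemma natCompatible_iff : NatCompatible f ↔ ∀ n, CompatibleMod (2 ^ n) f := by
  refine ⟨fun hf n => ?_, fun hf r _ u w => @hf r u w⟩
  rcases n.eq_zero_or_pos with rfl | hn
  · exact fun a b _ => Nat.modEq_one
  · exact hf n hn

lemma natErgodic_iff (hf : NatCompatible f) :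
    NatErgodic f ↔ ∀ n, IsTransitive (residueMap (2 ^ n) f) := by
  have hsemi (n : ℕ) := (natCompatible_iff.1 hf n).semiconj_natCast
  constructor
  · intro he n
    rcases n.eq_zero_or_pos with rfl | hn
    · rw [pow_zero]
      exact isTransitive_of_subsingleton _
    · obtain ⟨fn, hfn, -, ht⟩ := he n hn
      have fn_eq : fn = residueMap (2 ^ n) f := by
        funext z
        rw [residueMap, ← hfn, ZMod.natCast_zmod_val]
      exact fn_eq ▸ ht
  · intro ht n _
    exact ⟨_, fun u => ((hsemi n).eq u).symm, Finite.injective_iff_bijective.1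
      (Finite.injective_iff_surjective.2 (ht n).surjective), ht n⟩

lemma NatErgodic.injectiveMod (he : NatErgodic f) (hf : NatCompatible f) (n : ℕ) :
    InjectiveMod (2 ^ n) f :=
  (natCompatible_iff.1 hf n).injectiveMod_of_isTransitive ((natErgodic_iff hf).1 he n)

lemma natErgodic_iff_odd_sum_div (hf : NatCompatible f) (hinj : ∀ n, InjectiveMod (2 ^ n) f) :
    NatErgodic f ↔ ∀ n, Odd (∑ r ∈ range (2 ^ n), f r / 2 ^ n) := by
  have hc := natCompatible_iff.1 hf
  have lift (n : ℕ) (ht : IsTransitive (residueMap (2 ^ n) f)) :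
      IsTransitive (residueMap (2 ^ (n + 1)) f) ↔ Odd (∑ r ∈ range (2 ^ n), f r / 2 ^ n) := by
    rw [pow_succ']
    exact isTransitive_residueMap_two_mul_iff (hc n) (pow_succ' 2 n ▸ hc (n + 1))
      (pow_succ' 2 n ▸ hinj (n + 1)) ht
  rw [natErgodic_iff hf]
  refine ⟨fun ht n => (lift n (ht n)).1 (ht (n + 1)), fun hodd n => ?_⟩
  induction n with
  | zero =>
    rw [pow_zero]
    exact isTransitive_of_subsingleton _
  | succ n ih => exact (lift n ih).2 (hodd n)

lemma NatCompatible.comp (hf : NatCompatible f) (hg : NatCompatible g) : NatCompatible (f ∘ g) :=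
  fun r hr u w h => hf r hr _ _ (hg r hr u w h)

lemma natErgodic_comp_swap (hf : NatCompatible f) (hinj : ∀ n, InjectiveMod (2 ^ n) f)
    (hs : NatCompatible s) (he : NatErgodic (s ∘ f)) : NatErgodic (f ∘ s) := by
  rw [natErgodic_iff (hs.comp hf)] at he
  rw [natErgodic_iff (hf.comp hs)]
  intro n
  have ht := he n
  rw [(natCompatible_iff.1 hs n).residueMap_comp] at ht
  rw [(natCompatible_iff.1 hf n).residueMap_comp]
  exact ht.of_semiconj (π := residueMap (2 ^ n) f) (fun _ => rfl)
    (Finite.surjective_of_injective (hinj n).residueMap_injective)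

/-- `d` is `1/2`-Lipschitz for the 2-adic distance. Adding such a `d` to a map, or taking the
exclusive or with it, does not affect injectivity modulo powers of two. -/
def NatContracting (d : ℕ → ℕ) : Prop :=
  ∀ n ⦃a b⦄, a ≡ b [MOD 2 ^ n] → d a ≡ d b [MOD 2 ^ (n + 1)]

lemma NatContracting.natCompatible (hd : NatContracting d) : NatCompatible d :=
  fun r _ _ _ h => (hd r h).of_dvd (pow_dvd_pow 2 r.le_succ)

lemma NatCompatible.add (hf : NatCompatible f) (hg : NatCompatible g) :
    NatCompatible fun x => f x + g x :=
  fun r hr u w h => Nat.ModEq.add (hf r hr u w h) (hg r hr u w h)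

lemma NatCompatible.xor (hf : NatCompatible f) (hg : NatCompatible g) :
    NatCompatible fun x => f x ^^^ g x := fun r hr u w h => by
  simp only [Nat.xor_mod_two_pow, hf r hr u w h, hg r hr u w h]

lemma injectiveMod_two_pow_of_modEq_imp (hf : ∀ n, InjectiveMod (2 ^ n) f)
    (h : ∀ n a b, a ≡ b [MOD 2 ^ n] → g a ≡ g b [MOD 2 ^ (n + 1)] → f a ≡ f b [MOD 2 ^ (n + 1)])
    (n : ℕ) : InjectiveMod (2 ^ n) g := by
  induction n with
  | zero => exact fun a b _ => Nat.modEq_one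
  | succ n ih =>
    exact fun a b e => hf (n + 1) (h n a b (ih (e.of_dvd (pow_dvd_pow 2 n.le_succ))) e)

lemma NatContracting.injectiveMod_add (hd : NatContracting d) (hf : ∀ n, InjectiveMod (2 ^ n) f) :
    ∀ n, InjectiveMod (2 ^ n) fun x => f x + d x :=
  injectiveMod_two_pow_of_modEq_imp hf fun n _ _ h e => (hd n h).add_right_cancel e

lemma NatContracting.injectiveMod_xor (hd : NatContracting d) (hf : ∀ n, InjectiveMod (2 ^ n) f) :
    ∀ n, InjectiveMod (2 ^ n) fun x => f x ^^^ d x :=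
  injectiveMod_two_pow_of_modEq_imp hf fun n a b h e => by
    simp only [Nat.ModEq, Nat.xor_mod_two_pow] at e
    rw [show d a % 2 ^ (n + 1) = d b % 2 ^ (n + 1) from hd n h] at e
    exact Nat.xor_left_injective e

lemma NatErgodic.add_contracting (he : NatErgodic f) (hf : NatCompatible f)
    (hd : NatContracting d) (hsum : ∀ n, 2 ^ (n + 1) ∣ ∑ r ∈ range (2 ^ n), d r) :
    NatErgodic fun x => f x + d x := by
  have finj := he.injectiveMod hf
  have ginj := hd.injectiveMod_add finj
  rw [natErgodic_iff_odd_sum_div (hf.add hd.natCompatible) ginj]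
  intro n
  obtain ⟨t, ht⟩ := hsum n
  have digit_sum : ∑ r ∈ range (2 ^ n), (f r + d r) / 2 ^ n =
      ∑ r ∈ range (2 ^ n), f r / 2 ^ n + 2 * t := by
    have h := (ginj n).sum_range
    rw [sum_add_distrib, (finj n).sum_range, ht, add_assoc] at h
    apply Nat.eq_of_mul_eq_mul_left (Nat.two_pow_pos n)
    linear_combination -(Nat.add_left_cancel h)
  rw [digit_sum]
  exact ((natErgodic_iff_odd_sum_div hf finj).1 he n).add_even (even_two_mul t)

lemma NatErgodic.xor_contracting (he : NatErgodic f) (hf : NatCompatible f)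
    (hd : NatContracting d) (hsum : ∀ n, Even (∑ r ∈ range (2 ^ n), d r / 2 ^ n)) :
    NatErgodic fun x => f x ^^^ d x := by
  have finj := he.injectiveMod hf
  rw [natErgodic_iff_odd_sum_div (hf.xor hd.natCompatible) (hd.injectiveMod_xor finj)]
  intro n
  have digit_sum : ∑ r ∈ range (2 ^ n), (f r ^^^ d r) / 2 ^ n ≡
      ∑ r ∈ range (2 ^ n), f r / 2 ^ n + ∑ r ∈ range (2 ^ n), d r / 2 ^ n [MOD 2] := by
    rw [← sum_add_distrib]
    refine Nat.ModEq.sum fun r _ => ?_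
    rw [Nat.xor_div_two_pow]
    exact Nat.xor_mod_two_eq
  rw [Nat.odd_iff, digit_sum, ← Nat.odd_iff]
  exact ((natErgodic_iff_odd_sum_div hf finj).1 he n).add_even (hsum n)

lemma sum_range_two_mul_modEq {m N : ℕ} {w : ℕ → ℕ} (hw : ∀ x, w (N + x) ≡ w x [MOD m]) :
    ∑ r ∈ range (2 * N), w r ≡ 2 * ∑ r ∈ range N, w r [MOD m] := by
  rw [two_mul, two_mul, sum_range_add]
  exact (Nat.ModEq.sum fun r _ => hw r).add_left _

lemma NatCompatible.four_mul_modEq (hv : NatCompatible v) {n a b : ℕ} (h : a ≡ b [MOD 2 ^ n]) :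
    4 * v a ≡ 4 * v b [MOD 2 ^ (n + 2)] := by
  rw [show 2 ^ (n + 2) = 4 * 2 ^ n by ring]
  exact (natCompatible_iff.1 hv n h).mul_left' 4

lemma NatCompatible.natContracting_four_mul (hv : NatCompatible v) :
    NatContracting fun x => 4 * v x :=
  fun n _ _ h => (hv.four_mul_modEq h).of_dvd (pow_dvd_pow 2 (Nat.le_succ (n + 1)))

lemma NatCompatible.two_pow_dvd_two_mul_sum (hv : NatCompatible v) (n : ℕ) :
    2 ^ n ∣ 2 * ∑ r ∈ range (2 ^ n), v r := by
  induction n with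
  | zero => exact one_dvd _
  | succ n ih =>
    have doubling : ∑ r ∈ range (2 ^ (n + 1)), v r ≡ 2 * ∑ r ∈ range (2 ^ n), v r [MOD 2 ^ n] := by
      rw [pow_succ']
      exact sum_range_two_mul_modEq fun x => natCompatible_iff.1 hv n Nat.add_modEq_left
    exact (pow_succ' 2 n).dvd.trans (Nat.mul_dvd_mul_left 2 ((doubling.dvd_iff dvd_rfl).2 ih))

lemma NatCompatible.two_pow_dvd_sum_four_mul (hv : NatCompatible v) (n : ℕ) :
    2 ^ (n + 1) ∣ ∑ r ∈ range (2 ^ n), 4 * v r := by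
  rw [← mul_sum, show 4 = 2 * 2 from rfl, mul_assoc, pow_succ']
  exact Nat.mul_dvd_mul_left 2 (hv.two_pow_dvd_two_mul_sum n)

lemma NatCompatible.even_sum_four_mul_div (hv : NatCompatible v) (n : ℕ) :
    Even (∑ r ∈ range (2 ^ n), 4 * v r / 2 ^ n) := by
  rcases n with _ | n
  · simp [show Even 4 by decide]
  have digit_periodic (x : ℕ) :
      4 * v (2 ^ n + x) / 2 ^ (n + 1) ≡ 4 * v x / 2 ^ (n + 1) [MOD 2] := by
    have h : 4 * v (2 ^ n + x) % (2 ^ (n + 1) * 2) = 4 * v x % (2 ^ (n + 1) * 2) :=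
      hv.four_mul_modEq Nat.add_modEq_left
    rw [Nat.ModEq, ← Nat.mod_mul_right_div_self, h, Nat.mod_mul_right_div_self]
  have doubling := sum_range_two_mul_modEq (w := fun r => 4 * v r / 2 ^ (n + 1)) digit_periodic
  rw [← pow_succ'] at doubling
  exact even_iff_two_dvd.2 ((doubling.dvd_iff dvd_rfl).2 (dvd_mul_right 2 _))

lemma NatErgodic.add_four_mul (he : NatErgodic f) (hf : NatCompatible f) (hv : NatCompatible v) :
    NatErgodic fun x => f x + 4 * v x :=
  he.add_contracting hf hv.natContracting_four_mul hv.two_pow_dvd_sum_four_mul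

lemma NatErgodic.xor_four_mul (he : NatErgodic f) (hf : NatCompatible f) (hv : NatCompatible v) :
    NatErgodic fun x => f x ^^^ 4 * v x :=
  he.xor_contracting hf hv.natContracting_four_mul hv.even_sum_four_mul_div

lemma natCompatible_id : NatCompatible id :=
  fun _ _ _ _ h => h

end Ergodic

end Paper

/-- if `f, v : ℕ → ℕ` are compatible and `f` is ergodic, then each of
`x ↦ f (x + 4·v x)`, `x ↦ f (x ⊕ 4·v x)`, `x ↦ f x + 4·v x`, `x ↦ f x ⊕ 4·v x`
is compatible and ergodic. -/
theorem statement7 (f v : ℕ → ℕ) (hf : Paper.NatCompatible f) (hv : Paper.NatCompatible v)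
    (hfe : Paper.NatErgodic f) :
    (Paper.NatCompatible (fun x => f (x + 4 * v x)) ∧
      Paper.NatErgodic (fun x => f (x + 4 * v x))) ∧
    (Paper.NatCompatible (fun x => f (x ^^^ (4 * v x))) ∧
      Paper.NatErgodic (fun x => f (x ^^^ (4 * v x)))) ∧
    (Paper.NatCompatible (fun x => f x + 4 * v x) ∧
      Paper.NatErgodic (fun x => f x + 4 * v x)) ∧
    (Paper.NatCompatible (fun x => f x ^^^ (4 * v x)) ∧
      Paper.NatErgodic (fun x => f x ^^^ (4 * v x))) := by
  have h4v := hv.natContracting_four_mul.natCompatible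
  have hadd := Paper.natCompatible_id.add h4v
  have hxor := Paper.natCompatible_id.xor h4v
  have comp_swap {s : ℕ → ℕ} := Paper.natErgodic_comp_swap (s := s) hf (hfe.injectiveMod hf)
  exact ⟨⟨hf.comp hadd, comp_swap hadd (hfe.add_four_mul hf (hv.comp hf))⟩,
    ⟨hf.comp hxor, comp_swap hxor (hfe.xor_four_mul hf (hv.comp hf))⟩,
    ⟨hf.add h4v, hfe.add_four_mul hf hv⟩,
    ⟨hf.xor h4v, hfe.xor_four_mul hf hv⟩⟩
end

section
/- Let m ≥ 1, let c₀,…,c_{m−1} ∈ ℤ₂, and let g₀,…,g_{m−1} : ℤ₂ → ℤ₂ be compatible maps such that: (i) g_j(x) ≡ x + c_j (mod 2) for all x and all j; (ii) Σ_{j=0}^{m−1} c_j ≡ 1 (mod 2); (iii) the sequence (c_{i mod m} mod 2)_{i≥0} is purely periodic with shortest period length m; (iv) for every k ≥ 1 and every j there is a Boolean function φ_k^j : {0,1}^k → ℤ/2 with δ_k(g_j(z)) = δ_k(z) + φ_k^j(δ₀(z),…,δ_{k−1}(z)) for all z ∈ ℤ₂; (v) for every k ≥ 1, the number of indices j ∈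 {0,…,m−1} for which φ_k^j has odd weight is odd. Then for every x₀ ∈ ℤ₂ the sequence x_{i+1} = g_{i mod m}(x_i) is strictly uniformly distributed: for every k ≥ 1 the sequence (x_i mod 2^k) is purely periodic with shortest period length 2^k·m and every element of ℤ/2^k occurs exactly m times per period. Moreover: (1) for every s ≥ 0 the sequence (δ_s(x_i))_{i≥0} is purely periodic with period length 2^{s+1}·m; (2) δ_s(x_{i+2^s·m}) ≡ δ_s(x_i) + 1 (mod 2) for all s ≥ 0 and i ≥ 0; (3) for every t ≥ 1 and every r ≥ 0 the sequence (x_{r+i·m} mod 2^t)_{i≥0} is purely periodic, its shortest period has length 2^t, and every element of ℤ/2^t occurs exactly once per period. -/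
/-!
Each binary digit is driven by the lower ones. If for every `r` the residues of `x (r + i * m)`
modulo `2 ^ k`, `i < 2 ^ k`, exhaust `ZMod (2 ^ k)`, then over `2 ^ k * m` steps the increments of
the `k`-th digit add up to the total weight of the Boolean functions at level `k`, which is odd. So
the digit flips, and a cycle of length `2 ^ k` lifts to one of length `2 ^ (k + 1)`. A period of
the whole sequence `x` modulo `2 ^ k` is a multiple of `m`, because it is also a period of the
increments of the lowest digit.
-/

namespace Paper

open Finset

section Periodicity

variable {α β : Type*} {s : ℕ → α} {t T : ℕ}

lemma PurePeriodic.comp (h : PurePeriodic s T) (f : α → β) : PurePeriodic (fun i => f (s i)) T :=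
  fun i => congrArg f (h i)

lemma PurePeriodic.of_succ_eq_add {A : Type*} [Add A] [IsLeftCancelAdd A] {u w : ℕ → A}
    (hu : PurePeriodic u T) (h : ∀ i, u (i + 1) = u i + w i) : PurePeriodic w T := fun i =>
  add_left_cancel <| calc
    u i + w (i + T) = u (i + 1 + T) := by rw [← hu i, ← h, add_right_comm]
    _ = u i + w i := by rw [hu, h]

lemma ShortestPeriod.dvd (hs : ShortestPeriod s t) (hT : PurePeriodic s T) : t ∣ T := by
  obtain ⟨ht, hper, hmin⟩ := hs
  by_contra hdvd
  have hmod : PurePeriodic s (T % t) := fun i => by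
    rw [← hT i, ← Function.Periodic.map_mod_nat hper (i + T % t), Nat.add_mod_mod,
      Function.Periodic.map_mod_nat hper]
  exact (hmin _ (Nat.pos_of_ne_zero fun h => hdvd (Nat.dvd_of_mod_eq_zero h)) hmod).not_gt
    (Nat.mod_lt T ht)

end Periodicity

section RangeSums

variable {M : Type*} [AddCommMonoid M]

lemma sum_range_mul (m N : ℕ) (f : ℕ → M) :
    ∑ i ∈ range (N * m), f i = ∑ r ∈ range m, ∑ l ∈ range N, f (r + l * m) := by
  induction N with
  | zero => simp
  | succ N ih =>
    rw [Nat.succ_mul, sum_range_add, ih, ← sum_add_distrib]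
    exact sum_congr rfl fun r _ => by rw [sum_range_succ, add_comm (N * m)]

lemma sum_range_add_of_periodic {m : ℕ} {f : ℕ → M} (hf : Function.Periodic f m) (i : ℕ) :
    ∑ r ∈ range m, f (i + r) = ∑ r ∈ range m, f r := calc
  ∑ r ∈ range m, f (i + r) = ∑ j ∈ Ico i (i + m), f (j % m) := by
    simp only [sum_Ico_eq_sum_range, Nat.add_sub_cancel_left, hf.map_mod_nat]
  _ = (((Multiset.Ico i (i + m)).map (· % m)).map f).sum := by
    rw [Multiset.map_map]; rfl
  _ = ∑ r ∈ range m, f r := by rw [Nat.multiset_Ico_map_mod]; rfl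

end RangeSums

/-- The sequence `s` runs over and over through a cycle of `N` distinct points; for `N = 0` this
means that `s` is injective. -/
def IsSimpleCycle {α : Type*} (s : ℕ → α) (N : ℕ) : Prop :=
  ∀ i j, s i = s j ↔ i ≡ j [MOD N]

namespace IsSimpleCycle

variable {α : Type*} {s : ℕ → α} {N : ℕ}

lemma congr {β : Type*} {t : ℕ → β} (h : IsSimpleCycle s N) (hst : ∀ i j, t i = t j ↔ s i = s j) :
    IsSimpleCycle t N :=
  fun i j => (hst i j).trans (h i j)

lemma purePeriodic (h : IsSimpleCycle s N) : PurePeriodic s N :=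
  fun _ => (h _ _).2 Nat.add_modEq_right

lemma dvd_of_apply_eq_apply_zero (h : IsSimpleCycle s N) {T : ℕ} (hT : s T = s 0) : N ∣ T :=
  (Nat.modEq_zero_iff_dvd).1 ((h T 0).1 hT)

lemma shortestPeriod (h : IsSimpleCycle s N) (hN : 0 < N) : ShortestPeriod s N :=
  ⟨hN, h.purePeriodic, fun T hT hper =>
    Nat.le_of_dvd hT (h.dvd_of_apply_eq_apply_zero (by simpa only [zero_add] using hper 0))⟩

lemma sum_comp [Fintype α] (h : IsSimpleCycle s N) (hN : Fintype.card α = N)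
    {M : Type*} [AddCommMonoid M] (f : α → M) : ∑ i ∈ range N, f (s i) = ∑ a, f a := by
  classical
  have hinj : Set.InjOn s (range N) := fun i hi j hj hij =>
    ((h i j).1 hij).eq_of_lt_of_lt (mem_range.1 hi) (mem_range.1 hj)
  have himage : (range N).image s = univ :=
    eq_univ_of_card _ (by rw [card_image_of_injOn hinj, card_range, hN])
  rw [← himage, sum_image hinj]

lemma card_filter_eq [Fintype α] [DecidableEq α] (h : IsSimpleCycle s N)
    (hN : Fintype.card α = N) (a : α) : #{i ∈ range N | s i = a} = 1 := by
  rw [card_filter, h.sum_comp hN fun b => if b = a then 1 else 0, sum_ite_eq' univ a]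
  exact if_pos (mem_univ a)

lemma prodMk {A : Type*} [AddLeftCancelMonoid A] {d : ℕ → A} {g : A} (h : IsSimpleCycle s N)
    (hd : ∀ i, d (i + N) = d i + g) :
    IsSimpleCycle (fun i => (s i, d i)) (N * addOrderOf g) := by
  have hmul (i q : ℕ) : d (i + N * q) = d i + q • g := by
    induction q with
    | zero => simp
    | succ q ih => rw [Nat.mul_succ, ← add_assoc, hd, ih, succ_nsmul, add_assoc]
  have hadd (i n : ℕ) : (s i, d i) = (s (i + n), d (i + n)) ↔ N * addOrderOf g ∣ n := by
    rw [Prod.mk.injEq, h i, Nat.modEq_iff_dvd' (Nat.le_add_right i n), Nat.add_sub_cancel_left]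
    constructor
    · rintro ⟨⟨q, rfl⟩, hincr⟩
      rw [hmul, left_eq_add] at hincr
      exact mul_dvd_mul_left N (addOrderOf_dvd_of_nsmul_eq_zero hincr)
    · rintro ⟨q, rfl⟩
      rw [mul_assoc, hmul, mul_nsmul, addOrderOf_nsmul_eq_zero, nsmul_zero, add_zero]
      exact ⟨dvd_mul_right N _, rfl⟩
  intro i j
  rcases le_total i j with hij | hji
  · obtain ⟨n, rfl⟩ := Nat.exists_eq_add_of_le hij
    rw [hadd, Nat.modEq_iff_dvd' hij, Nat.add_sub_cancel_left]
  · obtain ⟨n, rfl⟩ := Nat.exists_eq_add_of_le hji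
    rw [eq_comm, hadd, Nat.ModEq.comm, Nat.modEq_iff_dvd' hji, Nat.add_sub_cancel_left]

end IsSimpleCycle

/-- Each of the subsequences of `s` along the residue classes modulo `m` runs through a cycle of
`N` distinct points. The start `r` is not restricted to `r < m`, so that the property is invariant
under shifts of `s`. -/
def IsInterleavedCycle {α : Type*} (s : ℕ → α) (m N : ℕ) : Prop :=
  ∀ r, IsSimpleCycle (fun i => s (r + i * m)) N

namespace IsInterleavedCycle

variable {α : Type*} {s : ℕ → α} {m N : ℕ}

lemma purePeriodic (h : IsInterleavedCycle s m N) : PurePeriodic s (N * m) := fun i => by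
  simpa only [zero_add, zero_mul, add_zero] using (h i).purePeriodic 0

lemma shortestPeriod (h : IsInterleavedCycle s m N) (hm : 0 < m) (hN : 0 < N)
    (hdvd : ∀ T, PurePeriodic s T → m ∣ T) : ShortestPeriod s (N * m) := by
  refine ⟨Nat.mul_pos hN hm, h.purePeriodic, fun T hT hper => ?_⟩
  obtain ⟨q, rfl⟩ := hdvd T hper
  have hq : N ∣ q := (h 0).dvd_of_apply_eq_apply_zero
    (by simpa only [zero_add, zero_mul, mul_comm q] using hper 0)
  rw [mul_comm m q]
  exact Nat.mul_le_mul_right m (Nat.le_of_dvd (Nat.pos_of_mul_pos_left hT) hq)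

lemma card_filter_eq [Fintype α] [DecidableEq α] (h : IsInterleavedCycle s m N)
    (hN : Fintype.card α = N) (a : α) : #{i ∈ range (N * m) | s i = a} = m := by
  simp only [card_filter, sum_range_mul]
  simp only [← card_filter, (h _).card_filter_eq hN, sum_const, card_range, smul_eq_mul, mul_one]

lemma skew_add_period [Fintype α] (h : IsInterleavedCycle s m N) (hN : Fintype.card α = N)
    {A : Type*} [AddCommMonoid A] {d : ℕ → A} {ψ : ℕ → α → A} (hψ : Function.Periodic ψ m)
    (hd : ∀ i, d (i + 1) = d i + ψ i (s i)) (i : ℕ) :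
    d (i + N * m) = d i + ∑ j ∈ range m, ∑ a, ψ j a := by
  have hsum : ∀ n, d (i + n) = d i + ∑ j ∈ range n, ψ (i + j) (s (i + j)) := fun n => by
    induction n with
    | zero => simp
    | succ n ih => rw [← add_assoc, hd, ih, sum_range_succ, add_assoc]
  have hperiodic : Function.Periodic (fun j => ∑ a, ψ j a) m := fun j => by simp only [hψ j]
  calc d (i + N * m)
    _ = d i + ∑ r ∈ range m, ∑ l ∈ range N, ψ (i + (r + l * m)) (s (i + (r + l * m))) := by
      rw [hsum, sum_range_mul]
    _ = d i + ∑ r ∈ range m, ∑ l ∈ range N, ψ (i + r) (s (i + r + l * m)) := by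
      simp only [← add_assoc, ← smul_eq_mul (_ : ℕ) m, hψ.nsmul _ _]
    _ = d i + ∑ r ∈ range m, ∑ a, ψ (i + r) a := by
      simp only [(h _).sum_comp hN]
    _ = d i + ∑ j ∈ range m, ∑ a, ψ j a := by rw [sum_range_add_of_periodic hperiodic]

end IsInterleavedCycle

section Digits

lemma val_toZModPow_succ (k : ℕ) (z : ℤ_[2]) :
    (PadicInt.toZModPow (k + 1) z).val =
      (PadicInt.toZModPow k z).val + 2 ^ k * (digit k z).val := by
  have hlt : (PadicInt.toZModPow (k + 1) z).val / 2 ^ k < 2 :=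
    Nat.div_lt_of_lt_mul ((ZMod.val_lt _).trans_eq (pow_succ 2 k))
  rw [digit, ZMod.val_natCast, Nat.mod_mod, Nat.mod_eq_of_lt hlt,
    ← PadicInt.cast_toZModPow k (k + 1) k.le_succ z, ZMod.cast_eq_val, ZMod.val_natCast,
    Nat.mod_add_div]

lemma toZModPow_succ_eq_iff {k : ℕ} {z w : ℤ_[2]} :
    PadicInt.toZModPow (k + 1) z = PadicInt.toZModPow (k + 1) w ↔
      PadicInt.toZModPow k z = PadicInt.toZModPow k w ∧ digit k z = digit k w := by
  constructor
  · intro h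
    refine ⟨?_, by simp only [digit, h]⟩
    rw [← PadicInt.cast_toZModPow k (k + 1) k.le_succ z, h, PadicInt.cast_toZModPow _ _ k.le_succ]
  · rintro ⟨hlow, hdigit⟩
    apply ZMod.val_injective
    rw [val_toZModPow_succ, val_toZModPow_succ, hlow, hdigit]

lemma digit_zero_eq_castHom (z : ℤ_[2]) :
    digit 0 z = ZMod.castHom (dvd_pow_self 2 one_ne_zero) (ZMod 2) (PadicInt.toZModPow 1 z) := by
  rw [digit, ZMod.castHom_apply, ZMod.cast_eq_val]
  simp

lemma digit_zero_add (z w : ℤ_[2]) : digit 0 (z + w) = digit 0 z + digit 0 w := by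
  simp only [digit_zero_eq_castHom, map_add]

/-- The vector `(δ₀(z), …, δ_{k-1}(z))` of the lowest `k` binary digits of `z`. -/
noncomputable def digits (k : ℕ) (z : ℤ_[2]) : Fin k → ZMod 2 :=
  fun r => digit r z

lemma digits_succ_eq_iff {k : ℕ} {z w : ℤ_[2]} :
    digits (k + 1) z = digits (k + 1) w ↔ digits k z = digits k w ∧ digit k z = digit k w := by
  simp only [digits, funext_iff, Fin.forall_fin_succ', Fin.val_castSucc, Fin.val_last]

lemma digits_eq_iff {k : ℕ} {z w : ℤ_[2]} :
    digits k z = digits k w ↔ PadicInt.toZModPow k z = PadicInt.toZModPow k w := by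
  induction k with
  | zero =>
    have : Subsingleton (ZMod (2 ^ 0)) := ZMod.subsingleton_iff.2 (pow_zero 2)
    exact iff_of_true (Subsingleton.elim _ _) (Subsingleton.elim _ _)
  | succ k ih => rw [digits_succ_eq_iff, ih, toZModPow_succ_eq_iff]

end Digits

/-- A sequence of 2-adic integers, each of whose digits is incremented at time `i` by a function
`ψ k i` of the lower digits that is `m`-periodic in `i`, where at every level `k` the total
increment over one period and over all values of the lower digits is odd. -/
structure IsOddTriangularOrbit (m : ℕ) (ψ : (k : ℕ) → ℕ → (Fin k → ZMod 2) → ZMod 2)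
    (x : ℕ → ℤ_[2]) : Prop where
  periodic : ∀ k, Function.Periodic (ψ k) m
  digit_succ : ∀ k i, digit k (x (i + 1)) = digit k (x i) + ψ k i (digits k (x i))
  sum_eq_one : ∀ k, ∑ j ∈ range m, ∑ u, ψ k j u = 1

namespace IsOddTriangularOrbit

variable {m : ℕ} {ψ : (k : ℕ) → ℕ → (Fin k → ZMod 2) → ZMod 2} {x : ℕ → ℤ_[2]}

lemma digit_add_of_isInterleavedCycle (h : IsOddTriangularOrbit m ψ x) {k : ℕ}
    (hk : IsInterleavedCycle (fun i => digits k (x i)) m (2 ^ k)) (i : ℕ) :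
    digit k (x (i + 2 ^ k * m)) = digit k (x i) + 1 := by
  have hcard : Fintype.card (Fin k → ZMod 2) = 2 ^ k := by simp
  rw [← h.sum_eq_one k]
  exact hk.skew_add_period (d := fun i => digit k (x i)) hcard (h.periodic k) (h.digit_succ k) i

lemma isInterleavedCycle_digits (h : IsOddTriangularOrbit m ψ x) (k : ℕ) :
    IsInterleavedCycle (fun i => digits k (x i)) m (2 ^ k) := by
  induction k with
  | zero => exact fun _ _ _ => iff_of_true (Subsingleton.elim _ _) Nat.modEq_one
  | succ k ih =>
    intro r
    have hflip : ∀ i, digit k (x (r + (i + 2 ^ k) * m)) = digit k (x (r + i * m)) + 1 := fun i => by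
      rw [add_mul, ← add_assoc, h.digit_add_of_isInterleavedCycle ih]
    have hpair := (ih r).prodMk (d := fun i => digit k (x (r + i * m))) hflip
    rw [ZMod.addOrderOf_one, ← pow_succ] at hpair
    exact hpair.congr fun i j => digits_succ_eq_iff.trans Prod.mk_inj.symm

lemma isInterleavedCycle_toZModPow (h : IsOddTriangularOrbit m ψ x) (k : ℕ) :
    IsInterleavedCycle (fun i => PadicInt.toZModPow k (x i)) m (2 ^ k) :=
  fun r => (h.isInterleavedCycle_digits k r).congr fun _ _ => digits_eq_iff.symm

lemma digit_add_two_pow_mul (h : IsOddTriangularOrbit m ψ x) (k i : ℕ) :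
    digit k (x (i + 2 ^ k * m)) = digit k (x i) + 1 :=
  h.digit_add_of_isInterleavedCycle (h.isInterleavedCycle_digits k) i

lemma purePeriodic_digit (h : IsOddTriangularOrbit m ψ x) (k : ℕ) :
    PurePeriodic (fun i => digit k (x i)) (2 ^ (k + 1) * m) :=
  fun i => (toZModPow_succ_eq_iff.1 ((h.isInterleavedCycle_toZModPow (k + 1)).purePeriodic i)).2

end IsOddTriangularOrbit

lemma sum_eq_card_filter_eq_one {ι : Type*} (S : Finset ι) (f : ι → ZMod 2) :
    ∑ a ∈ S, f a = (#{a ∈ S | f a = 1} : ℕ) := by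
  have hite : ∀ a : ZMod 2, a = if a = 1 then 1 else 0 := by decide
  rw [← sum_boole]
  exact sum_congr rfl fun a _ => hite (f a)

lemma sum_sum_eq_one_of_odd_card {ι κ : Type*} {S : Finset ι} {T : Finset κ}
    {f : ι → κ → ZMod 2} (h : Odd #{j ∈ S | #{u ∈ T | f j u = 1} % 2 = 1}) :
    ∑ j ∈ S, ∑ u ∈ T, f j u = 1 := by
  simp only [← Nat.odd_iff, ← odd_sum_iff_odd_card_odd] at h
  simp only [sum_eq_card_filter_eq_one T]
  exact_mod_cast ZMod.natCast_eq_one_iff_odd.2 h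

/-- The increment of the `k`-th digit at time `i` in the theorem: at the lowest level it is the
lowest digit of `c (i % m)`, above it is given by the Boolean functions `φ`. -/
noncomputable def digitIncrement (m : ℕ) (c : ℕ → ℤ_[2])
    (φ : (k : ℕ) → ℕ → (Fin k → ZMod 2) → ZMod 2) : (k : ℕ) → ℕ → (Fin k → ZMod 2) → ZMod 2
  | 0, i, _ => digit 0 (c (i % m))
  | k + 1, i, u => φ (k + 1) (i % m) u

section DigitIncrement

variable {m : ℕ} {c : ℕ → ℤ_[2]} {g : ℕ → ℤ_[2] → ℤ_[2]}
  {φ : (k : ℕ) → ℕ → (Fin k → ZMod 2) → ZMod 2} {x : ℕ → ℤ_[2]}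

lemma digitIncrement_periodic (k : ℕ) : Function.Periodic (digitIncrement m c φ k) m := fun i => by
  funext u
  cases k <;> simp only [digitIncrement, Nat.add_mod_right]

lemma digit_succ_eq_add_digitIncrement (hm : 0 < m)
    (hzero : ∀ j < m, ∀ z, PadicInt.toZModPow 1 (g j z) = PadicInt.toZModPow 1 (z + c j))
    (hpos : ∀ k, 1 ≤ k → ∀ j < m, ∀ z, digit k (g j z) = digit k z + φ k j (digits k z))
    (hx : ∀ i, x (i + 1) = g (i % m) (x i)) (k i : ℕ) :
    digit k (x (i + 1)) = digit k (x i) + digitIncrement m c φ k i (digits k (x i)) := by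
  have hlt : i % m < m := Nat.mod_lt i hm
  cases k with
  | zero =>
    rw [hx, (toZModPow_succ_eq_iff.1 (hzero _ hlt (x i))).2, digit_zero_add, digitIncrement]
  | succ k => rw [hx, hpos _ k.succ_pos _ hlt, digitIncrement]

lemma sum_digitIncrement_eq_one
    (hzero : PadicInt.toZModPow 1 (∑ j ∈ range m, c j) = 1)
    (hpos : ∀ k, 1 ≤ k → Odd #{j ∈ range m | #{u : Fin k → ZMod 2 | φ k j u = 1} % 2 = 1})
    (k : ℕ) : ∑ j ∈ range m, ∑ u, digitIncrement m c φ k j u = 1 := by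
  have hmod : ∀ j ∈ range m, j % m = j := fun j hj => Nat.mod_eq_of_lt (mem_range.1 hj)
  cases k with
  | zero => calc
      ∑ j ∈ range m, ∑ u, digitIncrement m c φ 0 j u = ∑ j ∈ range m, digit 0 (c j) :=
        sum_congr rfl fun j hj => by rw [Fintype.sum_unique, digitIncrement, hmod j hj]
      _ = 1 := by
        simp only [digit_zero_eq_castHom, ← map_sum, hzero, map_one]
  | succ k =>
    rw [← sum_sum_eq_one_of_odd_card (hpos (k + 1) k.succ_pos)]
    exact sum_congr rfl fun j hj => by simp only [digitIncrement, hmod j hj]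

lemma dvd_of_purePeriodic_toZModPow
    (hg : ∀ j < m, ∀ z, PadicInt.toZModPow 1 (g j z) = PadicInt.toZModPow 1 (z + c j))
    (hc : ShortestPeriod (fun i => PadicInt.toZModPow 1 (c (i % m))) m)
    (hx : ∀ i, x (i + 1) = g (i % m) (x i)) {k T : ℕ} (hk : 1 ≤ k)
    (hT : PurePeriodic (fun i => PadicInt.toZModPow k (x i)) T) : m ∣ T := by
  have hlow : PurePeriodic (fun i => PadicInt.toZModPow 1 (x i)) T := by
    simpa only [PadicInt.cast_toZModPow 1 k hk] using
      hT.comp (ZMod.cast : ZMod (2 ^ k) → ZMod (2 ^ 1))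
  exact hc.dvd (hlow.of_succ_eq_add fun i => by rw [hx, hg _ (Nat.mod_lt i hc.1), map_add])

end DigitIncrement

end Paper

/-- Lemma `le:WP-odd`: given `c 0, …, c (m-1) ∈ ℤ₂` and compatible maps
`g 0, …, g (m-1)` satisfying conditions (i)–(v), the sequence `x (i+1) = g (i % m) (x i)`
is strictly uniformly distributed; moreover (1) each coordinate sequence `δ_s (x i)` is
purely periodic with period length `2^(s+1)·m`, (2) the second half of the period is the
negation of the first half, and (3) each subsequence `x (r + i·m) mod 2^t` is purely
periodic with shortest period length `2^t`, each residue occurring exactly once per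
period. -/
theorem statement9 (m : ℕ) (hm : 1 ≤ m) (c : ℕ → ℤ_[2]) (g : ℕ → ℤ_[2] → ℤ_[2])
    (hgc : ∀ j < m, Paper.Compatible 2 (g j))
    -- (i) `g j x ≡ x + c j (mod 2)`
    (hi : ∀ j < m, ∀ x : ℤ_[2],
      PadicInt.toZModPow 1 (g j x) = PadicInt.toZModPow 1 (x + c j))
    -- (ii) `∑ j < m, c j ≡ 1 (mod 2)`
    (hii : PadicInt.toZModPow 1 (∑ j ∈ Finset.range m, c j) = 1)
    -- (iii) the sequence `(c (i % m) mod 2)` is purely periodic with shortest period `m`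
    (hiii : Paper.ShortestPeriod (fun i => PadicInt.toZModPow 1 (c (i % m))) m)
    -- (iv) `δ_k (g j z) = δ_k z + φ k j (δ₀ z, …, δ_{k-1} z)`
    (φ : (k : ℕ) → ℕ → (Fin k → ZMod 2) → ZMod 2)
    (hiv : ∀ k : ℕ, 1 ≤ k → ∀ j < m, ∀ z : ℤ_[2],
      Paper.digit k (g j z) = Paper.digit k z + φ k j (fun r => Paper.digit r.val z))
    -- (v) for every `k ≥ 1` an odd number of the `φ k j`, `j < m`, have odd weight
    (hv : ∀ k : ℕ, 1 ≤ k →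
      Odd (((Finset.range m).filter (fun j =>
        ((Finset.univ.filter (fun u : Fin k → ZMod 2 => φ k j u = 1)).card) % 2 = 1)).card))
    (x : ℕ → ℤ_[2]) (hx : ∀ i, x (i + 1) = g (i % m) (x i)) :
    (∀ k : ℕ, 1 ≤ k →
      Paper.ShortestPeriod (fun i => PadicInt.toZModPow k (x i)) (2 ^ k * m) ∧
      ∀ a : ZMod (2 ^ k),
        ((Finset.range (2 ^ k * m)).filter
          (fun i => PadicInt.toZModPow k (x i) = a)).card = m) ∧
    (∀ s : ℕ, Paper.PurePeriodic (fun i => Paper.digit s (x i)) (2 ^ (s + 1) * m)) ∧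
    (∀ s i : ℕ, Paper.digit s (x (i + 2 ^ s * m)) = Paper.digit s (x i) + 1) ∧
    (∀ t : ℕ, 1 ≤ t → ∀ r : ℕ,
      Paper.ShortestPeriod (fun i => PadicInt.toZModPow t (x (r + i * m))) (2 ^ t) ∧
      ∀ a : ZMod (2 ^ t),
        ((Finset.range (2 ^ t)).filter
          (fun i => PadicInt.toZModPow t (x (r + i * m)) = a)).card = 1) := by
  have horbit : Paper.IsOddTriangularOrbit m (Paper.digitIncrement m c φ) x :=
    ⟨Paper.digitIncrement_periodic, Paper.digit_succ_eq_add_digitIncrement hm hi hiv hx,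
      Paper.sum_digitIncrement_eq_one hii hv⟩
  have hcycle := horbit.isInterleavedCycle_toZModPow
  have hcard (k : ℕ) : Fintype.card (ZMod (2 ^ k)) = 2 ^ k := ZMod.card _
  refine ⟨fun k hk => ⟨?_, (hcycle k).card_filter_eq (hcard k)⟩, horbit.purePeriodic_digit,
    horbit.digit_add_two_pow_mul, fun t _ r => ⟨?_, (hcycle t r).card_filter_eq (hcard t)⟩⟩
  · exact (hcycle k).shortestPeriod hm (Nat.two_pow_pos k) fun T =>
      Paper.dvd_of_purePeriodic_toZModPow hi hiii hx hk
  · exact (hcycle t r).shortestPeriod (Nat.two_pow_pos t)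
end
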